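/- Let λ be the Lebesgue measure on (0,1), let H = L²(λ;ℝ), and let e_n ∈ H, n ∈ ℤ, be given by e_0(x) = 1, e_n(x) = √2·cos(2nπx) and e_{−n}(x) = √2·sin(2nπx) for n ∈ ℕ. For N ∈ ℕ let P_N : H → H be defined by P_N v = Σ_{n=−N}^{N} ⟨e_n, v⟩_H · e_n. Let T ∈ (0,∞), q ∈ {2,3,...}, a_0, a_1, ..., a_{q−1} ∈ ℝ, a_q ∈ ℝ∖{0}, χ ∈ (1/4,∞), and let ξ ∈ H satisfy Σ_{n∈ℤ} (1 + 4π²n²)^{2χ} · ⟨e_n, ξ⟩_H² < ∞. For each N ∈ ℕ let S_N : P_N H → P_N H be either the multiplier operator S_N e_n = exp(−4π²n²T/N)·e_n for all n ∈ {−N,...,N} (the exponential Euler case S_N = e^{(T/N)A} with A the periodic Laplacian) or the multiplier operator S_N e_n = (1 + 4π²n²T/N)^{−1}·e_n for all n ∈ {−N,...,N} (the linear-implicit Euler case S_N = (I − (T/N)A)^{−1}). Let (Ω,𝓕,P) be a probability space and, for each N ∈ ℕ, let (β^{j,N}_n)_{j ∈ {−N,...,N}, n ∈ {1,...,N}} be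 mutually independent centered Gaussian random variables each with variance T/N. Let Y^N : {0,1,...,N}×Ω → P_N H, N ∈ ℕ, be the stochastic processes satisfying Y^N_0 = P_N ξ and, for all n ∈ {0,1,...,N−1}, Y^N_{n+1} = P_N S_N( Y^N_n + (T/N)·Σ_{k=0}^{q} a_k·[Y^N_n]^k + Σ_{j=−N}^{N} β^{j,N}_{n+1}·e_j ), where [v]^k denotes the pointwise k-th power of the function v. Then for every p ∈ (0,∞) it holds that liminf_{N→∞} E[ ‖Y^N_N‖_H^p ] = ∞. -/

import Mathlib

open MeasureTheory ProbabilityTheory Real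
open scoped ENNReal

/-- The orthonormal trigonometric basis `e_n` of `L²((0,1);ℝ)`:
`e_0 = 1`, `e_n(x) = √2·cos(2nπx)` and `e_{−n}(x) = √2·sin(2nπx)` for `n ≥ 1`. -/
noncomputable def trigBasisFun (n : ℤ) : ℝ → ℝ := fun x =>
  if n = 0 then 1
  else if 0 < n then Real.sqrt 2 * Real.cos (2 * n * π * x)
  else Real.sqrt 2 * Real.sin (2 * (-n) * π * x)

/-- The `n`-th Fourier coefficient `⟨e_n, v⟩` of `v` with respect to the trigonometric basis. -/
noncomputable def fourierCoef (v : ℝ → ℝ) (n : ℤ) : ℝ :=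
  ∫ x in Set.Ioo (0 : ℝ) 1, trigBasisFun n x * v x

/-!
With a probability that is at least `exp (-C N ^ k)` the noise moves, in the first step, the
constant mode to about `N ^ 2` and all other modes close to zero, and is smaller than
`exp (-N ^ 3)` in every later step. On this event the numerical solution stays nearly constant: a
step amplifies the relative size of the nonconstant modes by a factor of at most `N ^ 2`, which
cannot make up for `exp (-N ^ 3)` within `N` steps. The superlinear drift then at least squares the
constant mode in every step, up to a factor of order `1 / N`, so that it exceeds `2 ^ 2 ^ N` after
`N` steps. Doubly exponential growth beats the smallness of the probability in every moment.
-/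

section TrigonometricBasis

/-- The amplitude `A_n` in the representation `e_n(x) = A_n cos(2πnx + φ_n)` of the trigonometric
basis, which lets orthonormality be checked without separating the cosine and sine modes. -/
noncomputable def trigAmplitude (n : ℤ) : ℝ := if n = 0 then 1 else √2

/-- The phase `φ_n` in the representation `e_n(x) = A_n cos(2πnx + φ_n)` of the trigonometric
basis; the sine modes carry the negative indices. -/
noncomputable def trigPhase (n : ℤ) : ℝ := if n < 0 then π / 2 else 0

lemma trigBasisFun_eq_cos (n : ℤ) (x : ℝ) :
    trigBasisFun n x = trigAmplitude n * cos (2 * π * n * x + trigPhase n) := by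
  rcases lt_trichotomy n 0 with hn | rfl | hn
  · simp only [trigBasisFun, trigAmplitude, trigPhase, hn.ne, hn.not_gt, hn, if_true, if_false,
      cos_add_pi_div_two, ← sin_neg]
    ring_nf
  · simp [trigBasisFun, trigAmplitude, trigPhase]
  · simp only [trigBasisFun, trigAmplitude, trigPhase, hn.ne', hn.not_gt, hn, if_true, if_false]
    ring_nf

@[fun_prop]
lemma continuous_trigBasisFun (n : ℤ) : Continuous (trigBasisFun n) := by
  simp only [funext (trigBasisFun_eq_cos n)]
  fun_prop

lemma trigBasisFun_zero (x : ℝ) : trigBasisFun 0 x = 1 := by simp [trigBasisFun]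

lemma abs_trigBasisFun_le (n : ℤ) (x : ℝ) : |trigBasisFun n x| ≤ 2 := by
  have h_amplitude : |trigAmplitude n| ≤ 2 := by
    unfold trigAmplitude
    split_ifs
    · norm_num
    · rw [abs_of_nonneg (sqrt_nonneg 2), sqrt_le_left zero_le_two]
      norm_num
  rw [trigBasisFun_eq_cos, abs_mul]
  exact (mul_le_of_le_one_right (abs_nonneg _) (abs_cos_le_one _)).trans h_amplitude

lemma setIntegral_Ioo_cos_int_mul_add (k : ℤ) (φ : ℝ) :
    ∫ x in Set.Ioo (0 : ℝ) 1, cos (2 * π * k * x + φ) = if k = 0 then cos φ else 0 := by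
  rw [← integral_Ioc_eq_integral_Ioo, ← intervalIntegral.integral_of_le zero_le_one]
  split_ifs with hk
  · simp [hk]
  · have hk' : 2 * π * k ≠ 0 := mul_ne_zero two_pi_pos.ne' (Int.cast_ne_zero.2 hk)
    have h_period : sin (2 * π * k * 1 + φ) = sin φ := by
      rw [← sin_add_int_mul_two_pi φ k]
      ring_nf
    rw [intervalIntegral.integral_comp_mul_add _ hk', integral_cos, h_period]
    simp

lemma trigBasisFun_mul_trigBasisFun (i j : ℤ) (x : ℝ) :
    trigBasisFun i x * trigBasisFun j x = trigAmplitude i * trigAmplitude j / 2 *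
      (cos (2 * π * (i - j : ℤ) * x + (trigPhase i - trigPhase j)) +
        cos (2 * π * (i + j : ℤ) * x + (trigPhase i + trigPhase j))) := by
  rw [trigBasisFun_eq_cos, trigBasisFun_eq_cos]
  have h := two_mul_cos_mul_cos (2 * π * i * x + trigPhase i) (2 * π * j * x + trigPhase j)
  push_cast
  rw [show 2 * π * (i - j) * x + (trigPhase i - trigPhase j) =
      2 * π * i * x + trigPhase i - (2 * π * j * x + trigPhase j) by ring,
    show 2 * π * (i + j) * x + (trigPhase i + trigPhase j) =
      2 * π * i * x + trigPhase i + (2 * π * j * x + trigPhase j) by ring]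
  linear_combination trigAmplitude i * trigAmplitude j / 2 * h

lemma fourierCoef_trigBasisFun (i j : ℤ) :
    fourierCoef (trigBasisFun i) j = if i = j then 1 else 0 := by
  have h_int (k : ℤ) (φ : ℝ) :
      IntegrableOn (fun x => cos (2 * π * k * x + φ)) (Set.Ioo (0 : ℝ) 1) :=
    (Continuous.integrableOn_Icc (by fun_prop)).mono_set Set.Ioo_subset_Icc_self
  simp only [fourierCoef, trigBasisFun_mul_trigBasisFun]
  rw [integral_const_mul, integral_add (h_int _ _) (h_int _ _),
    setIntegral_Ioo_cos_int_mul_add, setIntegral_Ioo_cos_int_mul_add]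
  obtain rfl | hij := eq_or_ne i j
  · obtain rfl | hi := eq_or_ne i 0
    · norm_num [trigAmplitude, trigPhase]
    · have h_add : i + i ≠ 0 := by lia
      simp [trigAmplitude, hi, h_add]
  · have h_sub : j - i ≠ 0 := by lia
    simp only [h_sub, hij, if_false, zero_add, mul_ite, mul_zero]
    split_ifs with h_add
    · have h_phase : trigPhase j + trigPhase i = π / 2 := by
        rcases lt_trichotomy i 0 with hi | hi | hi
        · simp [trigPhase, hi, show ¬ j < 0 by lia]
        · lia
        · simp [trigPhase, hi.not_gt, show j < 0 by lia]
      simp [h_phase]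
    · rfl

end TrigonometricBasis

section FourierCoefficients

lemma integrableOn_Ioo_of_continuous {v : ℝ → ℝ} (hv : Continuous v) (a b : ℝ) :
    IntegrableOn v (Set.Ioo a b) :=
  hv.integrableOn_Icc.mono_set Set.Ioo_subset_Icc_self

variable {u v : ℝ → ℝ}

lemma integrableOn_trigBasisFun_mul (hv : IntegrableOn v (Set.Ioo 0 1)) (j : ℤ) :
    IntegrableOn (fun x => trigBasisFun j x * v x) (Set.Ioo 0 1) :=
  Integrable.bdd_mul hv (continuous_trigBasisFun j).aestronglyMeasurable
    (ae_of_all _ (abs_trigBasisFun_le j))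

lemma fourierCoef_add (hu : IntegrableOn u (Set.Ioo 0 1)) (hv : IntegrableOn v (Set.Ioo 0 1))
    (j : ℤ) : fourierCoef (fun x => u x + v x) j = fourierCoef u j + fourierCoef v j := by
  simp only [fourierCoef, mul_add]
  exact integral_add (integrableOn_trigBasisFun_mul hu j) (integrableOn_trigBasisFun_mul hv j)

lemma fourierCoef_const_mul (c : ℝ) (v : ℝ → ℝ) (j : ℤ) :
    fourierCoef (fun x => c * v x) j = c * fourierCoef v j := by
  simp only [fourierCoef, mul_left_comm _ c]
  exact integral_const_mul c _

lemma fourierCoef_const (c : ℝ) (j : ℤ) :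
    fourierCoef (fun _ => c) j = if j = 0 then c else 0 := by
  have h := fourierCoef_const_mul c (trigBasisFun 0) j
  simpa [trigBasisFun_zero, fourierCoef_trigBasisFun, eq_comm] using h

lemma abs_fourierCoef_le (hv : IntegrableOn v (Set.Ioo 0 1)) (j : ℤ) :
    |fourierCoef v j| ≤ 2 * ∫ x in Set.Ioo (0 : ℝ) 1, |v x| := by
  rw [← integral_const_mul, ← norm_eq_abs]
  refine norm_integral_le_of_norm_le (hv.abs.const_mul 2) (ae_of_all _ fun x => ?_)
  rw [norm_eq_abs, abs_mul]
  exact mul_le_mul_of_nonneg_right (abs_trigBasisFun_le j x) (abs_nonneg _)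

lemma abs_fourierCoef_le_of_abs_le {C : ℝ} (hv : ∀ x, |v x| ≤ C) (j : ℤ) :
    |fourierCoef v j| ≤ 2 * C := by
  have h_bound (x : ℝ) : ‖trigBasisFun j x * v x‖ ≤ 2 * C := by
    rw [norm_mul]
    exact mul_le_mul (abs_trigBasisFun_le j x) (hv x) (norm_nonneg _) zero_le_two
  simpa [fourierCoef] using norm_setIntegral_le_of_norm_le_const (μ := volume)
    (s := Set.Ioo (0 : ℝ) 1) (by simp) fun x _ => h_bound x

lemma abs_fourierCoef_sub_le {C : ℝ} (hu : IntegrableOn u (Set.Ioo 0 1))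
    (hv : IntegrableOn v (Set.Ioo 0 1)) (huv : ∀ x, |u x - v x| ≤ C) (j : ℤ) :
    |fourierCoef u j - fourierCoef v j| ≤ 2 * C := by
  have h_sub := fourierCoef_add (u := fun x => u x - v x) (hu.sub hv) hv j
  simp only [sub_add_cancel] at h_sub
  rw [h_sub, add_sub_cancel_right]
  exact abs_fourierCoef_le_of_abs_le huv j

lemma sq_fourierCoef_le_integral_sq (hv : Continuous v) (j : ℤ) :
    fourierCoef v j ^ 2 ≤ ∫ x in Set.Ioo (0 : ℝ) 1, v x ^ 2 := by
  set c := fourierCoef v j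
  have h_mode : ∫ x in Set.Ioo (0 : ℝ) 1, trigBasisFun j x * trigBasisFun j x = 1 :=
    (fourierCoef_trigBasisFun j j).trans (if_pos rfl)
  have h_expand : ∫ x in Set.Ioo (0 : ℝ) 1, (v x - c * trigBasisFun j x) ^ 2 =
      (∫ x in Set.Ioo (0 : ℝ) 1, v x ^ 2) - c ^ 2 := by
    calc ∫ x in Set.Ioo (0 : ℝ) 1, (v x - c * trigBasisFun j x) ^ 2
        = ∫ x in Set.Ioo (0 : ℝ) 1, (v x ^ 2 - 2 * c * (trigBasisFun j x * v x) +
            c ^ 2 * (trigBasisFun j x * trigBasisFun j x)) := by congr with x; ring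
      _ = (∫ x in Set.Ioo (0 : ℝ) 1, v x ^ 2) - 2 * c * c + c ^ 2 * 1 := by
        rw [integral_add, integral_sub, integral_const_mul, integral_const_mul, h_mode]
        · rfl
        all_goals exact integrableOn_Ioo_of_continuous (by fun_prop) 0 1
      _ = _ := by ring
  have h_nonneg : 0 ≤ ∫ x in Set.Ioo (0 : ℝ) 1, (v x - c * trigBasisFun j x) ^ 2 :=
    integral_nonneg fun x => sq_nonneg _
  linarith

end FourierCoefficients

section TrigonometricPolynomials

/-- The trigonometric polynomial `∑_{j ∈ S} c_j e_j` with coefficients `c` and frequencies in `S`;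
the values of `c` outside `S` are irrelevant. -/
noncomputable def trigPoly (S : Finset ℤ) (c : ℤ → ℝ) (x : ℝ) : ℝ :=
  ∑ j ∈ S, c j * trigBasisFun j x

/-- The constant mode of `c` dominates: on `S`, every other coefficient is at most `η` times as
large. For small `η` this makes `trigPoly S c` uniformly close to the constant `c 0`. -/
def IsMeanDominated (S : Finset ℤ) (η : ℝ) (c : ℤ → ℝ) : Prop :=
  ∀ j ∈ S, j ≠ 0 → |c j| ≤ η * |c 0|

variable {S : Finset ℤ} {c : ℤ → ℝ}

@[fun_prop]
lemma continuous_trigPoly (S : Finset ℤ) (c : ℤ → ℝ) : Continuous (trigPoly S c) := by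
  unfold trigPoly
  fun_prop

lemma fourierCoef_trigPoly (c : ℤ → ℝ) {j : ℤ} (hj : j ∈ S) :
    fourierCoef (trigPoly S c) j = c j := by
  have h_sum : fourierCoef (trigPoly S c) j =
      ∑ i ∈ S, fourierCoef (fun x => c i * trigBasisFun i x) j := by
    simp only [fourierCoef, trigPoly, Finset.mul_sum]
    exact integral_finsetSum _ fun i _ => integrableOn_Ioo_of_continuous (by fun_prop) 0 1
  simp [h_sum, fourierCoef_const_mul, fourierCoef_trigBasisFun, hj]

lemma abs_trigPoly_le {C : ℝ} (hc : ∀ j ∈ S, |c j| ≤ C) (x : ℝ) :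
    |trigPoly S c x| ≤ 2 * S.card * C := by
  calc |trigPoly S c x| ≤ ∑ j ∈ S, |c j * trigBasisFun j x| := Finset.abs_sum_le_sum_abs _ _
    _ ≤ ∑ _j ∈ S, C * 2 := Finset.sum_le_sum fun j hj => by
      rw [abs_mul]
      exact mul_le_mul (hc j hj) (abs_trigBasisFun_le j x) (abs_nonneg _)
        ((abs_nonneg _).trans (hc j hj))
    _ = 2 * S.card * C := by
      rw [Finset.sum_const, nsmul_eq_mul]
      ring

lemma IsMeanDominated.abs_trigPoly_sub_le {η : ℝ} (hη : 0 ≤ η) (hc : IsMeanDominated S η c)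
    (h0 : 0 ∈ S) (x : ℝ) : |trigPoly S c x - c 0| ≤ 2 * S.card * (η * |c 0|) := by
  have h_erase : trigPoly S c x - c 0 = trigPoly (S.erase 0) c x := by
    rw [trigPoly, ← Finset.add_sum_erase S _ h0, trigBasisFun_zero, trigPoly]
    ring
  rw [h_erase]
  calc |trigPoly (S.erase 0) c x| ≤ 2 * (S.erase 0).card * (η * |c 0|) :=
        abs_trigPoly_le
          (fun j hj => hc j (Finset.mem_of_mem_erase hj) (Finset.ne_of_mem_erase hj)) x
    _ ≤ 2 * S.card * (η * |c 0|) := by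
      gcongr
      exact S.erase_subset 0

end TrigonometricPolynomials

section PowerGrowth

/-- `f` grows exactly like the power `|x| ^ (r + 1)`: it is locally Lipschitz with a constant
growing like `|x| ^ r`, and `α |x| ^ (r + 1) ≤ |f x|` as soon as `R ≤ |x|`. Polynomials of degree
`r + 1` are the model case, and for `1 ≤ r` this is the superlinearity that makes the Euler schemes
diverge. -/
structure HasPowerGrowth (f : ℝ → ℝ) (r : ℕ) (L α R : ℝ) : Prop where
  pos : 0 < α
  one_le : 1 ≤ R
  abs_sub_le : ∀ x y, |f x - f y| ≤ L * max 1 (max |x| |y|) ^ r * |x - y|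
  le_abs : ∀ x, R ≤ |x| → α * |x| ^ (r + 1) ≤ |f x|

namespace HasPowerGrowth

variable {f : ℝ → ℝ} {r : ℕ} {L α R : ℝ}

lemma nonneg (hf : HasPowerGrowth f r L α R) : 0 ≤ L := by
  simpa using (abs_nonneg _).trans (hf.abs_sub_le 1 0)

lemma continuous (hf : HasPowerGrowth f r L α R) : Continuous f := by
  refine continuous_iff_continuousAt.2 fun x => tendsto_iff_norm_sub_tendsto_zero.2 ?_
  have h_lim : Filter.Tendsto (fun y => L * max 1 (max |y| |x|) ^ r * |y - x|) (nhds x) (nhds 0) :=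
    (Continuous.tendsto' (by fun_prop) x 0 (by simp))
  exact squeeze_zero (fun _ => norm_nonneg _) (fun y => hf.abs_sub_le y x) h_lim

lemma abs_le (hf : HasPowerGrowth f r L α R) (x : ℝ) :
    |f x| ≤ (|f 0| + L) * max 1 |x| ^ (r + 1) := by
  have hL := hf.nonneg
  have h_one : 1 ≤ max 1 |x| ^ (r + 1) := one_le_pow₀ (le_max_left _ _)
  have h_lip : |f x - f 0| ≤ L * max 1 |x| ^ r * |x| := by
    simpa using hf.abs_sub_le x 0
  calc |f x| ≤ |f 0| + |f x - f 0| := by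
        rw [add_comm, ← sub_le_iff_le_add]
        exact abs_sub_abs_le_abs_sub _ _
    _ ≤ |f 0| * max 1 |x| ^ (r + 1) + L * max 1 |x| ^ r * max 1 |x| := by
      gcongr
      · exact le_mul_of_one_le_right (abs_nonneg _) h_one
      · exact h_lip.trans (by gcongr; exact le_max_right _ _)
    _ = (|f 0| + L) * max 1 |x| ^ (r + 1) := by ring

end HasPowerGrowth

lemma abs_sum_mul_pow_sub_sum_mul_pow_le (a : ℕ → ℝ) (r : ℕ) (x y : ℝ) :
    |∑ k ∈ Finset.range (r + 2), a k * x ^ k - ∑ k ∈ Finset.range (r + 2), a k * y ^ k| ≤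
      (∑ k ∈ Finset.range (r + 2), |a k| * k) * max 1 (max |x| |y|) ^ r * |x - y| := by
  rw [← Finset.sum_sub_distrib, Finset.sum_mul, Finset.sum_mul]
  refine (Finset.abs_sum_le_sum_abs _ _).trans (Finset.sum_le_sum fun k hk => ?_)
  have h_exponent : k - 1 ≤ r := by
    have := Finset.mem_range.1 hk
    lia
  have h_pow : max |x| |y| ^ (k - 1) ≤ max 1 (max |x| |y|) ^ r := by
    calc max |x| |y| ^ (k - 1) ≤ max 1 (max |x| |y|) ^ (k - 1) := by
          exact pow_le_pow_left₀ (le_max_of_le_left (abs_nonneg x)) (le_max_right _ _) _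
      _ ≤ max 1 (max |x| |y|) ^ r := pow_le_pow_right₀ (le_max_left (1 : ℝ) _) h_exponent
  calc |a k * x ^ k - a k * y ^ k| = |a k| * |x ^ k - y ^ k| := by rw [← mul_sub, abs_mul]
    _ ≤ |a k| * (|x - y| * k * max |x| |y| ^ (k - 1)) := by
      gcongr
      exact abs_pow_sub_pow_le x y k
    _ ≤ |a k| * (|x - y| * k * max 1 (max |x| |y|) ^ r) := by gcongr
    _ = |a k| * k * max 1 (max |x| |y|) ^ r * |x - y| := by ring

lemma mul_pow_sub_le_abs_sum_mul_pow (a : ℕ → ℝ) (r : ℕ) {x : ℝ} (hx : 1 ≤ |x|) :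
    |a (r + 1)| * |x| ^ (r + 1) - (∑ k ∈ Finset.range (r + 1), |a k|) * |x| ^ r ≤
      |∑ k ∈ Finset.range (r + 2), a k * x ^ k| := by
  have h_lower : |∑ k ∈ Finset.range (r + 1), a k * x ^ k| ≤
      (∑ k ∈ Finset.range (r + 1), |a k|) * |x| ^ r := by
    rw [Finset.sum_mul]
    refine (Finset.abs_sum_le_sum_abs _ _).trans (Finset.sum_le_sum fun k hk => ?_)
    rw [abs_mul, abs_pow]
    gcongr
    exact Finset.mem_range_succ_iff.1 hk
  have h_lead : |a (r + 1)| * |x| ^ (r + 1) = |a (r + 1) * x ^ (r + 1)| := by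
    rw [abs_mul, abs_pow]
  have h_triangle := abs_sub_abs_le_abs_add (a (r + 1) * x ^ (r + 1))
    (∑ k ∈ Finset.range (r + 1), a k * x ^ k)
  rw [Finset.sum_range_succ _ (r + 1), add_comm (∑ k ∈ Finset.range (r + 1), a k * x ^ k)]
  linarith

lemma exists_hasPowerGrowth_sum_mul_pow {a : ℕ → ℝ} {r : ℕ} (ha : a (r + 1) ≠ 0) :
    ∃ L α R, HasPowerGrowth (fun x => ∑ k ∈ Finset.range (r + 2), a k * x ^ k) r L α R := by
  have h_lead : 0 < |a (r + 1)| := abs_pos.2 ha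
  set A := ∑ k ∈ Finset.range (r + 1), |a k|
  refine ⟨_, |a (r + 1)| / 2, max 1 (2 * A / |a (r + 1)|), half_pos h_lead, le_max_left _ _,
    abs_sum_mul_pow_sub_sum_mul_pow_le a r, fun x hx => ?_⟩
  obtain ⟨hx_one, hx_A⟩ := max_le_iff.1 hx
  have h_absorb : A * |x| ^ r ≤ |a (r + 1)| / 2 * |x| * |x| ^ r := by
    gcongr
    rw [div_le_iff₀ h_lead] at hx_A
    linarith
  calc |a (r + 1)| / 2 * |x| ^ (r + 1)
      = |a (r + 1)| * |x| ^ (r + 1) - |a (r + 1)| / 2 * |x| * |x| ^ r := by ring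
    _ ≤ |a (r + 1)| * |x| ^ (r + 1) - A * |x| ^ r := by gcongr
    _ ≤ _ := mul_pow_sub_le_abs_sum_mul_pow a r hx_one

end PowerGrowth

section EulerStep

/-- The multiplier `σ` of a one-step scheme on the modes in `S` preserves the mean and does not
increase any mode. -/
structure IsEulerMultiplier (S : Finset ℤ) (σ : ℤ → ℝ) : Prop where
  zero_mem : 0 ∈ S
  map_zero : σ 0 = 1
  abs_le_one : ∀ j ∈ S, |σ j| ≤ 1

/-- One step `v ↦ P S (v + h f(v) + ∑ b_i e_i)` of the Euler schemes, where `P` projects onto the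
modes in `S`, the operator `S` multiplies the mode `j` by `σ j`, and `b` is the noise increment. -/
noncomputable def eulerStep (S : Finset ℤ) (σ : ℤ → ℝ) (h : ℝ) (f : ℝ → ℝ) (b : ℤ → ℝ)
    (v : ℝ → ℝ) : ℝ → ℝ := fun x =>
  ∑ j ∈ S, σ j *
    fourierCoef (fun y => v y + h * f (v y) + ∑ i ∈ S, b i * trigBasisFun i y) j *
      trigBasisFun j x

/-- The map induced by `eulerStep` on the coefficients of trigonometric polynomials. -/
noncomputable def eulerModeStep (S : Finset ℤ) (σ : ℤ → ℝ) (h : ℝ) (f : ℝ → ℝ) (b : ℤ → ℝ)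
    (c : ℤ → ℝ) (j : ℤ) : ℝ :=
  σ j * (c j + h * fourierCoef (fun x => f (trigPoly S c x)) j + b j)

/-- The coefficients of the Euler iterates started at `trigPoly S c₀`. The increment used in step
`n + 1` is `b (n + 1)`, as in the enumeration of the random inputs `β`. -/
noncomputable def eulerModes (S : Finset ℤ) (σ : ℤ → ℝ) (h : ℝ) (f : ℝ → ℝ) (b : ℕ → ℤ → ℝ)
    (c₀ : ℤ → ℝ) : ℕ → ℤ → ℝ
  | 0 => c₀
  | n + 1 => eulerModeStep S σ h f (b (n + 1)) (eulerModes S σ h f b c₀ n)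

variable {S : Finset ℤ} {σ : ℤ → ℝ} {h : ℝ} {f : ℝ → ℝ}

lemma eulerStep_trigPoly (hf : Continuous f) (b c : ℤ → ℝ) :
    eulerStep S σ h f b (trigPoly S c) = trigPoly S (eulerModeStep S σ h f b c) := by
  funext x
  refine Finset.sum_congr rfl fun j hj => ?_
  have h_coef : fourierCoef (fun y => trigPoly S c y + h * f (trigPoly S c y) + trigPoly S b y) j =
      c j + h * fourierCoef (fun y => f (trigPoly S c y)) j + b j := by
    rw [fourierCoef_add, fourierCoef_add, fourierCoef_const_mul, fourierCoef_trigPoly c hj,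
      fourierCoef_trigPoly b hj]
    all_goals exact integrableOn_Ioo_of_continuous (by fun_prop) 0 1
  exact congrArg (fun t => σ j * t * trigBasisFun j x) h_coef

lemma eq_trigPoly_eulerModes (hf : Continuous f) {b : ℕ → ℤ → ℝ} {c₀ : ℤ → ℝ} {N : ℕ}
    {y : ℕ → ℝ → ℝ} (hy_zero : y 0 = trigPoly S c₀)
    (hy_succ : ∀ n < N, y (n + 1) = eulerStep S σ h f (b (n + 1)) (y n)) {n : ℕ} (hn : n ≤ N) :
    y n = trigPoly S (eulerModes S σ h f b c₀ n) := by
  induction n with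
  | zero => exact hy_zero
  | succ n ih => rw [hy_succ n hn, ih (Nat.le_of_succ_le hn), eulerStep_trigPoly hf, eulerModes]

end EulerStep

section Blowup

/-- `η` is so small that relative perturbations of size `η` in each mode of `S` are harmless: they
move a mean-dominated polynomial by at most its mean, and change `f` by at most half of its leading
term `α |x| ^ (r + 1)`. -/
structure IsNegligible (S : Finset ℤ) (r : ℕ) (L α η : ℝ) : Prop where
  nonneg : 0 ≤ η
  two_mul_card_mul_le_one : 2 * S.card * η ≤ 1
  remainder_le : 2 * (2 ^ (r + 2) * L * S.card * η) ≤ α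

/-- The coefficients `c` describe a nearly constant function whose mean is so large that one Euler
step at least replaces `κ |c 0|` by its square. -/
structure IsBlowupState (S : Finset ℤ) (κ R η : ℝ) (c : ℤ → ℝ) : Prop where
  le_abs_mean : R ≤ |c 0|
  two_le : 2 ≤ κ * |c 0|
  isMeanDominated : IsMeanDominated S η c

variable {S : Finset ℤ} {σ : ℤ → ℝ} {h : ℝ} {f : ℝ → ℝ} {r : ℕ} {L α R η : ℝ} {b c : ℤ → ℝ}

lemma HasPowerGrowth.abs_fourierCoef_comp_sub_le (hf : HasPowerGrowth f r L α R)
    (hη : IsNegligible S r L α η) (hS : 0 ∈ S) (hc_one : 1 ≤ |c 0|) (hc : IsMeanDominated S η c)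
    (j : ℤ) :
    |fourierCoef (fun x => f (trigPoly S c x)) j - if j = 0 then f (c 0) else 0| ≤
      2 ^ (r + 2) * L * S.card * η * |c 0| ^ (r + 1) := by
  have hL := hf.nonneg
  have hf_cont := hf.continuous
  have h_near (x : ℝ) : |trigPoly S c x - c 0| ≤ 2 * S.card * η * |c 0| :=
    (hc.abs_trigPoly_sub_le hη.nonneg hS x).trans_eq (by ring)
  have h_max (x : ℝ) : max 1 (max |trigPoly S c x| |c 0|) ≤ 2 * |c 0| := by
    have h_mean : 2 * S.card * η * |c 0| ≤ |c 0| :=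
      mul_le_of_le_one_left (abs_nonneg _) hη.two_mul_card_mul_le_one
    have h_triangle := abs_sub_abs_le_abs_sub (trigPoly S c x) (c 0)
    exact max_le (by linarith) (max_le (by linarith [h_near x]) (by linarith))
  have h_comp (x : ℝ) : |f (trigPoly S c x) - f (c 0)| ≤
      2 ^ (r + 1) * L * S.card * η * |c 0| ^ (r + 1) := by
    calc |f (trigPoly S c x) - f (c 0)|
        ≤ L * max 1 (max |trigPoly S c x| |c 0|) ^ r * |trigPoly S c x - c 0| :=
          hf.abs_sub_le _ _
      _ ≤ L * (2 * |c 0|) ^ r * (2 * S.card * η * |c 0|) := by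
        gcongr
        · exact h_max x
        · exact h_near x
      _ = 2 ^ (r + 1) * L * S.card * η * |c 0| ^ (r + 1) := by ring
  rw [← fourierCoef_const (f (c 0)) j]
  refine (abs_fourierCoef_sub_le (integrableOn_Ioo_of_continuous (by fun_prop) 0 1)
    (integrableOn_Ioo_of_continuous continuous_const 0 1) h_comp j).trans_eq (by ring)

lemma mul_pow_le_abs_eulerModeStep_zero (hσ : IsEulerMultiplier S σ) (hh : 0 < h)
    (hf : HasPowerGrowth f r L α R) (hr : 1 ≤ r) (hη : IsNegligible S r L α η)
    (hb : ∀ j ∈ S, |b j| ≤ η) (hc : IsBlowupState S (h * α / 4) R η c) :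
    h * α / 4 * |c 0| ^ (r + 1) ≤ |eulerModeStep S σ h f b c 0| := by
  have hc_one : 1 ≤ |c 0| := hf.one_le.trans hc.le_abs_mean
  have hη_one : η ≤ 1 := by
    have h_card : (1 : ℝ) ≤ S.card := by exact_mod_cast Finset.card_pos.2 ⟨0, hσ.zero_mem⟩
    nlinarith [hη.two_mul_card_mul_le_one, hη.nonneg]
  set F := fourierCoef (fun x => f (trigPoly S c x)) 0
  have h_remainder : |F - f (c 0)| ≤ α / 2 * |c 0| ^ (r + 1) := by
    refine (hf.abs_fourierCoef_comp_sub_le hη hσ.zero_mem hc_one hc.isMeanDominated 0).trans ?_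
    gcongr
    linarith [hη.remainder_le]
  have h_drift : α / 2 * |c 0| ^ (r + 1) ≤ |F| := by
    have h_triangle := abs_sub_abs_le_abs_sub (f (c 0)) F
    rw [abs_sub_comm] at h_triangle
    linarith [hf.le_abs _ hc.le_abs_mean]
  have h_absorb : |c 0| + |b 0| ≤ h * α / 4 * |c 0| ^ (r + 1) := by
    calc |c 0| + |b 0| ≤ 2 * |c 0| := by linarith [hb 0 hσ.zero_mem]
      _ ≤ 2 * |c 0| ^ r := by
        gcongr
        exact le_self_pow₀ hc_one (Nat.one_le_iff_ne_zero.1 hr)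
      _ ≤ h * α / 4 * |c 0| * |c 0| ^ r := by
        gcongr
        exact hc.two_le
      _ = _ := by ring
  have h_step : eulerModeStep S σ h f b c 0 = h * F + (c 0 + b 0) := by
    rw [eulerModeStep, hσ.map_zero]
    ring
  calc h * α / 4 * |c 0| ^ (r + 1)
      = h * (α / 2 * |c 0| ^ (r + 1)) - h * α / 4 * |c 0| ^ (r + 1) := by ring
    _ ≤ h * |F| - (|c 0| + |b 0|) := by gcongr
    _ ≤ |h * F| - |c 0 + b 0| := by
      rw [abs_mul, abs_of_pos hh]
      gcongr
      exact abs_add_le _ _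
    _ ≤ |eulerModeStep S σ h f b c 0| := by
      rw [h_step]
      exact abs_sub_abs_le_abs_add _ _

lemma isMeanDominated_eulerModeStep (hσ : IsEulerMultiplier S σ) (hh : 0 < h)
    (hf : HasPowerGrowth f r L α R) (hr : 1 ≤ r) (hη : IsNegligible S r L α η)
    (hb : ∀ j ∈ S, |b j| ≤ η) (hc : IsBlowupState S (h * α / 4) R η c) {γ : ℝ}
    (hγ : 2 + h * (2 ^ (r + 2) * L * S.card) ≤ h * α / 4 * γ) :
    IsMeanDominated S (γ * η) (eulerModeStep S σ h f b c) := by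
  intro j hj hj0
  have hη_nonneg := hη.nonneg
  have hL := hf.nonneg
  have hα := hf.pos
  have hγ_nonneg : 0 ≤ γ :=
    nonneg_of_mul_nonneg_right ((by positivity : (0 : ℝ) ≤ _).trans hγ) (by positivity)
  have hc_one : 1 ≤ |c 0| := hf.one_le.trans hc.le_abs_mean
  have h_pow : |c 0| ≤ |c 0| ^ (r + 1) := le_self_pow₀ hc_one r.succ_ne_zero
  set F := fourierCoef (fun x => f (trigPoly S c x)) j
  have h_drift : |F| ≤ 2 ^ (r + 2) * L * S.card * η * |c 0| ^ (r + 1) := by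
    simpa [hj0] using
      hf.abs_fourierCoef_comp_sub_le hη hσ.zero_mem hc_one hc.isMeanDominated j
  calc |eulerModeStep S σ h f b c j| ≤ |c j + h * F + b j| := by
        rw [eulerModeStep, abs_mul]
        exact mul_le_of_le_one_left (abs_nonneg _) (hσ.abs_le_one j hj)
    _ ≤ |c j| + h * |F| + |b j| := by
      refine (abs_add_three _ _ _).trans_eq ?_
      rw [abs_mul, abs_of_pos hh]
    _ ≤ η * |c 0| + h * (2 ^ (r + 2) * L * S.card * η * |c 0| ^ (r + 1)) + η * 1 := by
      gcongr
      · exact hc.isMeanDominated j hj hj0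
      · linarith [hb j hj]
    _ ≤ η * |c 0| ^ (r + 1) + h * (2 ^ (r + 2) * L * S.card * η * |c 0| ^ (r + 1)) +
        η * |c 0| ^ (r + 1) := by
      gcongr
      exact hc_one.trans h_pow
    _ = η * (2 + h * (2 ^ (r + 2) * L * S.card)) * |c 0| ^ (r + 1) := by ring
    _ ≤ η * (h * α / 4 * γ) * |c 0| ^ (r + 1) := by gcongr
    _ = γ * η * (h * α / 4 * |c 0| ^ (r + 1)) := by ring
    _ ≤ γ * η * |eulerModeStep S σ h f b c 0| := by
      gcongr
      exact mul_pow_le_abs_eulerModeStep_zero hσ hh hf hr hη hb hc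

lemma mul_sq_le_abs_eulerModeStep_zero (hσ : IsEulerMultiplier S σ) (hh : 0 < h)
    (hf : HasPowerGrowth f r L α R) (hr : 1 ≤ r) (hη : IsNegligible S r L α η)
    (hb : ∀ j ∈ S, |b j| ≤ η) (hc : IsBlowupState S (h * α / 4) R η c) :
    h * α / 4 * |c 0| ^ 2 ≤ |eulerModeStep S σ h f b c 0| := by
  have hα := hf.pos
  refine le_trans ?_ (mul_pow_le_abs_eulerModeStep_zero hσ hh hf hr hη hb hc)
  gcongr ?_ * ?_
  exact pow_le_pow_right₀ (hf.one_le.trans hc.le_abs_mean) (by lia)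

lemma isBlowupState_eulerModeStep (hσ : IsEulerMultiplier S σ) (hh : 0 < h)
    (hf : HasPowerGrowth f r L α R) (hr : 1 ≤ r) (hη : IsNegligible S r L α η)
    (hb : ∀ j ∈ S, |b j| ≤ η) (hc : IsBlowupState S (h * α / 4) R η c) {γ : ℝ}
    (hγ : 2 + h * (2 ^ (r + 2) * L * S.card) ≤ h * α / 4 * γ) :
    IsBlowupState S (h * α / 4) R (γ * η) (eulerModeStep S σ h f b c) := by
  have hα := hf.pos
  have h_grow : |c 0| ≤ |eulerModeStep S σ h f b c 0| := by
    calc |c 0| ≤ 2 * |c 0| := by linarith [abs_nonneg (c 0)]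
      _ ≤ h * α / 4 * |c 0| * |c 0| := by
        gcongr
        exact hc.two_le
      _ = h * α / 4 * |c 0| ^ 2 := by ring
      _ ≤ _ := mul_sq_le_abs_eulerModeStep_zero hσ hh hf hr hη hb hc
  exact ⟨hc.le_abs_mean.trans h_grow,
    hc.two_le.trans (mul_le_mul_of_nonneg_left h_grow (by positivity)),
    isMeanDominated_eulerModeStep hσ hh hf hr hη hb hc hγ⟩

variable {δ γ : ℝ}

lemma IsNegligible.mono (hη : IsNegligible S r L α η) (hL : 0 ≤ L) (hδ : 0 ≤ δ) (hδη : δ ≤ η) :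
    IsNegligible S r L α δ where
  nonneg := hδ
  two_mul_card_mul_le_one := le_trans (by gcongr) hη.two_mul_card_mul_le_one
  remainder_le := le_trans (by gcongr) hη.remainder_le

lemma isBlowupState_and_pow_two_pow_le (hσ : IsEulerMultiplier S σ) (hh : 0 < h)
    (hf : HasPowerGrowth f r L α R) (hr : 1 ≤ r) (hδ : 0 ≤ δ) (hγ_one : 1 ≤ γ)
    (hγ : 2 + h * (2 ^ (r + 2) * L * S.card) ≤ h * α / 4 * γ) {k : ℕ}
    (hη : IsNegligible S r L α (γ ^ k * δ)) {b c : ℕ → ℤ → ℝ}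
    (hb : ∀ n < k, ∀ j ∈ S, |b n j| ≤ δ) (hc : ∀ n, c (n + 1) = eulerModeStep S σ h f (b n) (c n))
    (hc_zero : IsBlowupState S (h * α / 4) R δ (c 0)) {n : ℕ} (hn : n ≤ k) :
    IsBlowupState S (h * α / 4) R (γ ^ n * δ) (c n) ∧
      (h * α / 4 * |c 0 0|) ^ 2 ^ n ≤ h * α / 4 * |c n 0| := by
  have hα := hf.pos
  induction n with
  | zero => simpa using hc_zero
  | succ n ih =>
    obtain ⟨h_state, h_pow⟩ := ih (Nat.le_of_succ_le hn)
    have hη' : IsNegligible S r L α (γ ^ n * δ) :=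
      hη.mono hf.nonneg (by positivity) (by gcongr; exact Nat.le_of_succ_le hn)
    have hb' (j : ℤ) (hj : j ∈ S) : |b n j| ≤ γ ^ n * δ :=
      (hb n hn j hj).trans (le_mul_of_one_le_left hδ (one_le_pow₀ hγ_one))
    rw [hc n, pow_succ' γ, mul_assoc]
    refine ⟨isBlowupState_eulerModeStep hσ hh hf hr hη' hb' h_state hγ, ?_⟩
    calc (h * α / 4 * |c 0 0|) ^ 2 ^ (n + 1) = ((h * α / 4 * |c 0 0|) ^ 2 ^ n) ^ 2 := by
          rw [pow_succ 2 n, pow_mul]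
      _ ≤ (h * α / 4 * |c n 0|) ^ 2 := by gcongr
      _ = h * α / 4 * (h * α / 4 * |c n 0| ^ 2) := by ring
      _ ≤ _ := by
        gcongr
        exact mul_sq_le_abs_eulerModeStep_zero hσ hh hf hr hη' hb' h_state

end Blowup

section Steering

/-- The noise increments which in the first step move the coefficients `c₀` to those of the constant
`M + 1` and vanish afterwards. -/
noncomputable def steeringNoise (S : Finset ℤ) (h : ℝ) (f : ℝ → ℝ) (c₀ : ℤ → ℝ) (M : ℝ) (n : ℕ)
    (j : ℤ) : ℝ :=
  if n = 1 then
    (if j = 0 then M + 1 else 0) - (c₀ j + h * fourierCoef (fun x => f (trigPoly S c₀ x)) j)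
  else 0

variable {S : Finset ℤ} {σ : ℤ → ℝ} {h : ℝ} {f : ℝ → ℝ} {r N : ℕ} {L α R M δ γ : ℝ}
  {b : ℕ → ℤ → ℝ} {c₀ : ℤ → ℝ}

lemma abs_steeringNoise_le (hM : 0 ≤ M) (n : ℕ) (j : ℤ) :
    |steeringNoise S h f c₀ M n j| ≤
      M + 1 + |c₀ j + h * fourierCoef (fun x => f (trigPoly S c₀ x)) j| := by
  have h_height : |if j = 0 then M + 1 else 0| ≤ M + 1 := by
    split_ifs
    · rw [abs_of_nonneg (by positivity)]
    · rw [abs_zero]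
      positivity
  by_cases hn : n = 1
  · rw [steeringNoise, if_pos hn]
    exact (abs_sub _ _).trans (by gcongr)
  · rw [steeringNoise, if_neg hn, abs_zero]
    positivity

lemma le_abs_and_isMeanDominated_eulerModeStep (hσ : IsEulerMultiplier S σ) (hδ : 0 ≤ δ)
    (hδ_one : δ ≤ 1) (hM : 1 ≤ M) (hb : ∀ j ∈ S, |b 1 j - steeringNoise S h f c₀ M 1 j| ≤ δ) :
    M ≤ |eulerModeStep S σ h f (b 1) c₀ 0| ∧
      IsMeanDominated S δ (eulerModeStep S σ h f (b 1) c₀) := by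
  have h_step (j : ℤ) : eulerModeStep S σ h f (b 1) c₀ j =
      σ j * ((if j = 0 then M + 1 else 0) + (b 1 j - steeringNoise S h f c₀ M 1 j)) := by
    simp only [eulerModeStep, steeringNoise, if_true]
    ring
  have h_mean : M ≤ |eulerModeStep S σ h f (b 1) c₀ 0| := by
    rw [h_step 0, hσ.map_zero, if_pos rfl, one_mul]
    refine le_trans ?_ (le_abs_self _)
    linarith [neg_le_of_abs_le (hb 0 hσ.zero_mem)]
  refine ⟨h_mean, fun j hj hj0 => ?_⟩
  rw [h_step j, if_neg hj0, zero_add, abs_mul]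
  calc |σ j| * |b 1 j - steeringNoise S h f c₀ M 1 j| ≤ 1 * δ := by
        gcongr
        exacts [hσ.abs_le_one j hj, hb j hj]
    _ ≤ δ * |eulerModeStep S σ h f (b 1) c₀ 0| := by
      rw [one_mul]
      exact le_mul_of_one_le_right hδ (hM.trans h_mean)

/-- Parameters for which noise that follows `steeringNoise` with height `M` up to an error `δ`
makes the Euler modes on `S` with step size `h` blow up within `N` steps; `γ` bounds the growth per
step of the relative size of the nonconstant modes. -/
structure IsBlowupRegime (S : Finset ℤ) (r N : ℕ) (L α R h M γ δ : ℝ) : Prop where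
  step_pos : 0 < h
  error_nonneg : 0 ≤ δ
  error_le_one : δ ≤ 1
  one_le_growth : 1 ≤ γ
  growth_le : 2 + h * (2 ^ (r + 2) * L * S.card) ≤ h * α / 4 * γ
  isNegligible : IsNegligible S r L α (γ ^ N * δ)
  le_height : R ≤ M
  rate_le_one : h * α / 4 ≤ 1
  four_le : 4 ≤ h * α / 4 * M

lemma IsBlowupRegime.two_pow_two_pow_le_abs_eulerModes
    (hreg : IsBlowupRegime S r N L α R h M γ δ) (hσ : IsEulerMultiplier S σ)
    (hf : HasPowerGrowth f r L α R) (hr : 1 ≤ r) (hN : 1 ≤ N)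
    (hb : ∀ n ∈ Finset.Icc 1 N, ∀ j ∈ S, |b n j - steeringNoise S h f c₀ M n j| ≤ δ) :
    2 ^ 2 ^ N ≤ |eulerModes S σ h f b c₀ N 0| := by
  obtain ⟨hh, hδ, hδ_one, hγ_one, hγ, hη, hRM, hκ, hκM⟩ := hreg
  have hα := hf.pos
  have hκ_nonneg : 0 ≤ h * α / 4 := by positivity
  obtain ⟨k, rfl⟩ : ∃ k, N = k + 1 := ⟨N - 1, by lia⟩
  obtain ⟨h_mean, h_dominated⟩ := le_abs_and_isMeanDominated_eulerModeStep (h := h) (f := f) hσ hδ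
    hδ_one (hf.one_le.trans hRM) (hb 1 (Finset.mem_Icc.2 ⟨le_rfl, hN⟩))
  have h_kick : 4 ≤ h * α / 4 * |eulerModeStep S σ h f (b 1) c₀ 0| :=
    hκM.trans (mul_le_mul_of_nonneg_left h_mean hκ_nonneg)
  have h_quiet (n : ℕ) (hn : n < k) (j : ℤ) (hj : j ∈ S) : |b (n + 2) j| ≤ δ := by
    simpa [steeringNoise] using hb (n + 2) (Finset.mem_Icc.2 ⟨by lia, by lia⟩) j hj
  have hη' : IsNegligible S r L α (γ ^ k * δ) :=
    hη.mono hf.nonneg (by positivity) (by gcongr; exact k.le_succ)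
  obtain ⟨-, h_pow⟩ := isBlowupState_and_pow_two_pow_le (b := fun n => b (n + 2))
    (c := fun n => eulerModes S σ h f b c₀ (n + 1)) hσ hh hf hr hδ hγ_one hγ hη' h_quiet
    (fun _ => rfl) ⟨hRM.trans h_mean, le_trans (by norm_num) h_kick, h_dominated⟩ le_rfl
  calc (2 : ℝ) ^ 2 ^ (k + 1) = 4 ^ 2 ^ k := by
        rw [pow_succ' 2 k, pow_mul]
        norm_num
    _ ≤ (h * α / 4 * |eulerModeStep S σ h f (b 1) c₀ 0|) ^ 2 ^ k := by gcongr
    _ ≤ h * α / 4 * |eulerModes S σ h f b c₀ (k + 1) 0| := h_pow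
    _ ≤ |eulerModes S σ h f b c₀ (k + 1) 0| := mul_le_of_le_one_left (abs_nonneg _) hκ

lemma IsBlowupRegime.sq_two_pow_two_pow_le_integral_sq
    (hreg : IsBlowupRegime S r N L α R h M γ δ) (hσ : IsEulerMultiplier S σ)
    (hf : HasPowerGrowth f r L α R) (hr : 1 ≤ r) (hN : 1 ≤ N) {y : ℕ → ℝ → ℝ}
    (hy_zero : y 0 = trigPoly S c₀)
    (hy_succ : ∀ n < N, y (n + 1) = eulerStep S σ h f (b (n + 1)) (y n))
    (hb : ∀ n ∈ Finset.Icc 1 N, ∀ j ∈ S, |b n j - steeringNoise S h f c₀ M n j| ≤ δ) :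
    (2 ^ 2 ^ N) ^ 2 ≤ ∫ x in Set.Ioo (0 : ℝ) 1, y N x ^ 2 := by
  rw [eq_trigPoly_eulerModes hf.continuous hy_zero hy_succ le_rfl]
  refine le_trans ?_ (sq_fourierCoef_le_integral_sq (continuous_trigPoly S _) 0)
  rw [fourierCoef_trigPoly _ hσ.zero_mem, ← sq_abs (eulerModes S σ h f b c₀ N 0)]
  gcongr
  exact hreg.two_pow_two_pow_le_abs_eulerModes hσ hf hr hN hb

end Steering

section BlowupScale

/-- The frequencies `-N, …, N` onto which `P_N` projects. -/
noncomputable abbrev fourierModes (N : ℕ) : Finset ℤ := Finset.Icc (-(N : ℤ)) N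

lemma card_fourierModes (N : ℕ) : (fourierModes N).card = 2 * N + 1 := by
  rw [Int.card_Icc]
  lia

lemma card_fourierModes_le {N : ℕ} (hN : 1 ≤ N) : (fourierModes N).card ≤ 3 * N := by
  rw [card_fourierModes]
  lia

lemma tendsto_card_mul_pow_mul_exp_neg_cube :
    Filter.Tendsto (fun N : ℕ => (fourierModes N).card * (((N : ℝ) ^ 2) ^ N * exp (-(N : ℝ) ^ 3)))
      Filter.atTop (nhds 0) := by
  have h_lim : Filter.Tendsto (fun N : ℕ => exp (-(N : ℝ))) Filter.atTop (nhds 0) :=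
    tendsto_exp_neg_atTop_nhds_zero.comp tendsto_natCast_atTop_atTop
  refine squeeze_zero' (.of_forall fun N => by positivity) ?_ h_lim
  filter_upwards [Filter.eventually_ge_atTop 3] with N hN
  have hN' : (3 : ℝ) ≤ N := by exact_mod_cast hN
  have h_card : ((fourierModes N).card : ℝ) ≤ exp (2 * N) := by
    rw [card_fourierModes]
    push_cast
    exact add_one_le_exp _
  have h_cast : (N : ℝ) ≤ exp N := by linarith [add_one_le_exp (N : ℝ)]
  calc (fourierModes N).card * (((N : ℝ) ^ 2) ^ N * exp (-(N : ℝ) ^ 3))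
      ≤ exp (2 * N) * ((exp N ^ 2) ^ N * exp (-(N : ℝ) ^ 3)) := by gcongr
    _ = exp (2 * N + (N * (2 * N) + -(N : ℝ) ^ 3)) := by
      rw [exp_add, exp_add, exp_nat_mul, ← Nat.cast_ofNat, exp_nat_mul]
    _ ≤ exp (-N) := by
      gcongr
      nlinarith [mul_nonneg (sub_nonneg.2 hN') (by positivity : (0 : ℝ) ≤ N * (N + 1))]

lemma eventually_isNegligible (r : ℕ) (L : ℝ) {α : ℝ} (hα : 0 < α) :
    ∀ᶠ N : ℕ in Filter.atTop,
      IsNegligible (fourierModes N) r L α (((N : ℝ) ^ 2) ^ N * exp (-(N : ℝ) ^ 3)) := by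
  have h_remainder := tendsto_card_mul_pow_mul_exp_neg_cube.const_mul (2 * (2 ^ (r + 2) * L))
  have h_card := tendsto_card_mul_pow_mul_exp_neg_cube.const_mul 2
  rw [mul_zero] at h_remainder h_card
  filter_upwards [h_remainder.eventually_le_const hα, h_card.eventually_le_const one_pos]
    with N hN_remainder hN_card
  exact ⟨by positivity, by linarith, by linarith⟩

variable {f : ℝ → ℝ} {r : ℕ} {L α R T : ℝ}

lemma eventually_isBlowupRegime (hf : HasPowerGrowth f r L α R) (hT : 0 < T) :
    ∀ᶠ N : ℕ in Filter.atTop,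
      IsBlowupRegime (fourierModes N) r N L α R (T / N) ((N : ℝ) ^ 2) ((N : ℝ) ^ 2)
        (exp (-(N : ℝ) ^ 3)) := by
  have hα := hf.pos
  have hL := hf.nonneg
  have h_large (B : ℝ) : ∀ᶠ N : ℕ in Filter.atTop, B ≤ N :=
    tendsto_natCast_atTop_atTop.eventually_ge_atTop B
  filter_upwards [h_large 1, h_large R, h_large (T * α / 4), h_large (4 / (T * α / 4)),
    h_large ((2 + 3 * T * (2 ^ (r + 2) * L)) / (T * α / 4)), eventually_isNegligible r L hα]
    with N hN hNR hN_rate hN_height hN_growth hN_negligible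
  have hN_pos : (0 : ℝ) < N := by linarith
  rw [div_le_iff₀ (by positivity)] at hN_height hN_growth
  have h_rate : T / N * α / 4 * (N : ℝ) ^ 2 = N * (T * α / 4) := by
    field_simp
  have h_card : ((fourierModes N).card : ℝ) ≤ 3 * N := by
    exact_mod_cast card_fourierModes_le (by exact_mod_cast hN)
  exact
    { step_pos := by positivity
      error_nonneg := by positivity
      error_le_one := exp_le_one_iff.2 (by simp)
      one_le_growth := one_le_pow₀ hN
      growth_le := by
        calc 2 + T / N * (2 ^ (r + 2) * L * (fourierModes N).card)
            ≤ 2 + T / N * (2 ^ (r + 2) * L * (3 * N)) := by gcongr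
          _ = 2 + 3 * T * (2 ^ (r + 2) * L) := by field_simp
          _ ≤ T / N * α / 4 * (N : ℝ) ^ 2 := by rwa [h_rate]
      isNegligible := hN_negligible
      le_height := hNR.trans (le_self_pow₀ hN two_ne_zero)
      rate_le_one := by
        rwa [div_mul_eq_mul_div, div_div, mul_comm (N : ℝ), ← div_div, div_le_one hN_pos]
      four_le := by rwa [h_rate] }

lemma HasPowerGrowth.abs_fourierCoef_comp_trigPoly_le (hf : HasPowerGrowth f r L α R) {C : ℝ}
    (hC : 0 ≤ C) {c : ℤ → ℝ} (hc : ∀ j, |c j| ≤ C) {N : ℕ} (hN : 1 ≤ N) (j : ℤ) :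
    |fourierCoef (fun x => f (trigPoly (fourierModes N) c x)) j| ≤
      2 * ((|f 0| + L) * (1 + 6 * C) ^ (r + 1)) * (N : ℝ) ^ (r + 1) := by
  have hL := hf.nonneg
  have hN' : (1 : ℝ) ≤ N := by exact_mod_cast hN
  have h_max (x : ℝ) : max 1 |trigPoly (fourierModes N) c x| ≤ (1 + 6 * C) * N := by
    have h_card : ((fourierModes N).card : ℝ) ≤ 3 * N := by exact_mod_cast card_fourierModes_le hN
    have h_poly : |trigPoly (fourierModes N) c x| ≤ 2 * (3 * N) * C :=
      (abs_trigPoly_le (fun j _ => hc j) x).trans (by gcongr)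
    exact max_le (by nlinarith) (by linarith)
  refine (abs_fourierCoef_le_of_abs_le (fun x => (hf.abs_le _).trans ?_) j).trans_eq
    (mul_assoc 2 ((|f 0| + L) * (1 + 6 * C) ^ (r + 1)) _).symm
  rw [mul_assoc, ← mul_pow]
  gcongr
  exact h_max x

lemma eventually_abs_steeringNoise_add_le (hf : HasPowerGrowth f r L α R) (hr : 1 ≤ r)
    (hT : 0 < T) {C : ℝ} {c : ℤ → ℝ} (hc : ∀ j, |c j| ≤ C) :
    ∀ᶠ N : ℕ in Filter.atTop, ∀ n j,
      |steeringNoise (fourierModes N) (T / N) f c ((N : ℝ) ^ 2) n j| + exp (-(N : ℝ) ^ 3) ≤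
        (N : ℝ) ^ (r + 2) := by
  have hC : 0 ≤ C := (abs_nonneg _).trans (hc 0)
  set D := 2 * ((|f 0| + L) * (1 + 6 * C) ^ (r + 1))
  filter_upwards [Filter.eventually_ge_atTop 1,
    tendsto_natCast_atTop_atTop.eventually_ge_atTop (3 + C + T * D)] with N hN hN_large n j
  have hN' : (1 : ℝ) ≤ N := by exact_mod_cast hN
  have h_one : (1 : ℝ) ≤ N ^ (r + 1) := one_le_pow₀ hN'
  have h_error : exp (-(N : ℝ) ^ 3) ≤ 1 := exp_le_one_iff.2 (by simp)
  have h_drift : |T / N * fourierCoef (fun x => f (trigPoly (fourierModes N) c x)) j| ≤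
      T * D * N ^ (r + 1) := by
    rw [abs_mul, abs_of_pos (by positivity), mul_assoc]
    exact mul_le_mul (div_le_self hT.le hN') (hf.abs_fourierCoef_comp_trigPoly_le hC hc hN j)
      (abs_nonneg _) hT.le
  have h_sq : (N : ℝ) ^ 2 ≤ (N : ℝ) ^ (r + 1) := pow_le_pow_right₀ hN' (by lia)
  have h_noise : |steeringNoise (fourierModes N) (T / N) f c ((N : ℝ) ^ 2) n j| ≤
      (N : ℝ) ^ (r + 1) + 1 + (C + T * D * (N : ℝ) ^ (r + 1)) := by
    refine (abs_steeringNoise_le (by positivity) n j).trans ?_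
    gcongr
    exact (abs_add_le _ _).trans (add_le_add (hc j) h_drift)
  calc _ ≤ (N : ℝ) ^ (r + 1) + 1 + (C + T * D * N ^ (r + 1)) + 1 := add_le_add h_noise h_error
    _ ≤ (3 + C + T * D) * N ^ (r + 1) := by nlinarith
    _ ≤ N * N ^ (r + 1) := by gcongr
    _ = N ^ (r + 2) := by ring

end BlowupScale

section SteeringProbability

lemma ofReal_le_gaussianReal_closedBall (μ : ℝ) {v : NNReal} (hv : v ≠ 0) {d δ B : ℝ}
    (hB : |d - μ| + δ ≤ B) :
    ENNReal.ofReal (2 * δ * ((√(2 * π * v))⁻¹ * exp (-B ^ 2 / (2 * v)))) ≤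
      gaussianReal μ v (Metric.closedBall d δ) := by
  have h_density : ∀ x ∈ Metric.closedBall d δ,
      ENNReal.ofReal ((√(2 * π * v))⁻¹ * exp (-B ^ 2 / (2 * v))) ≤ gaussianPDF μ v x := by
    intro x hx
    have h_dist : |x - μ| ≤ |B| := by
      rw [Metric.mem_closedBall, dist_eq] at hx
      linarith [abs_sub_le x d μ, le_abs_self B]
    refine ENNReal.ofReal_le_ofReal ?_
    simp only [gaussianPDFReal_def]
    gcongr ?_ * exp (-?_ / _)
    exact sq_le_sq.2 h_dist
  rw [gaussianReal_apply _ hv, mul_comm (2 * δ), ENNReal.ofReal_mul (by positivity),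
    ← Real.volume_closedBall, ← setLIntegral_const]
  exact setLIntegral_mono' Metric.isClosed_closedBall.measurableSet h_density

variable {Ω : Type*}

/-- The event that the random inputs `β`, up to time `N` and on the modes in `S`, stay within `δ` of
the deterministic values `d`. -/
def shadowingEvent (S : Finset ℤ) (N : ℕ) (β : ℤ → ℕ → Ω → ℝ) (d : ℕ → ℤ → ℝ) (δ : ℝ) : Set Ω :=
  {ω | ∀ n ∈ Finset.Icc 1 N, ∀ j ∈ S, |β j n ω - d n j| ≤ δ}

lemma shadowingEvent_eq_iInter (S : Finset ℤ) (N : ℕ) (β : ℤ → ℕ → Ω → ℝ) (d : ℕ → ℤ → ℝ)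
    (δ : ℝ) : shadowingEvent S N β d δ =
      ⋂ i : S × Finset.Icc 1 N, β i.1 i.2 ⁻¹' Metric.closedBall (d i.2 i.1) δ := by
  ext ω
  simp only [shadowingEvent, Set.mem_ofPred_eq, Set.mem_iInter, Set.mem_preimage,
    Metric.mem_closedBall, dist_eq, Prod.forall, Subtype.forall]
  exact forall₂_comm.trans (by simp)

variable [MeasurableSpace Ω] {P : Measure Ω} {S : Finset ℤ} {N : ℕ} {β : ℤ → ℕ → Ω → ℝ}

lemma pow_card_le_measure_iInter_preimage {ι E : Type*} [Fintype ι] [MeasurableSpace E]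
    {X : ι → Ω → E} (hX : iIndepFun X P) {ν : ι → Measure E} (hν : ∀ i, HasLaw (X i) (ν i) P)
    {A : ι → Set E} (hA : ∀ i, MeasurableSet (A i)) {ρ : ℝ≥0∞} (hρ : ∀ i, ρ ≤ ν i (A i)) :
    ρ ^ Fintype.card ι ≤ P (⋂ i, X i ⁻¹' A i) := by
  have h_prod := hX.measure_inter_preimage_eq_mul Finset.univ fun i _ => hA i
  simp only [Finset.mem_univ, Set.iInter_true] at h_prod
  rw [h_prod, ← Finset.card_univ]
  refine Finset.pow_card_le_prod _ _ _ fun i _ => ?_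
  rw [← Measure.map_apply_of_aemeasurable (hν i).aemeasurable (hA i), (hν i).map_eq]
  exact hρ i

lemma nullMeasurableSet_shadowingEvent
    (hβ : ∀ j ∈ S, ∀ n ∈ Finset.Icc 1 N, AEMeasurable (β j n) P) (d : ℕ → ℤ → ℝ) (δ : ℝ) :
    NullMeasurableSet (shadowingEvent S N β d δ) P := by
  rw [shadowingEvent_eq_iInter]
  exact .iInter fun i => (hβ i.1 i.1.2 i.2 i.2.2).nullMeasurable
    Metric.isClosed_closedBall.measurableSet

lemma ofReal_pow_le_measure_shadowingEvent
    (hβ_indep : iIndepFun (fun i : S × Finset.Icc 1 N => β i.1 i.2) P) {v : NNReal} (hv : v ≠ 0)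
    (hβ_law : ∀ j ∈ S, ∀ n ∈ Finset.Icc 1 N, HasLaw (β j n) (gaussianReal 0 v) P)
    {d : ℕ → ℤ → ℝ} {δ B : ℝ} (hd : ∀ n j, |d n j| + δ ≤ B) :
    ENNReal.ofReal (2 * δ * ((√(2 * π * v))⁻¹ * exp (-B ^ 2 / (2 * v)))) ^ (S.card * N) ≤
      P (shadowingEvent S N β d δ) := by
  have h_card : Fintype.card (S × Finset.Icc 1 N) = S.card * N := by simp
  rw [shadowingEvent_eq_iInter, ← h_card]
  refine pow_card_le_measure_iInter_preimage hβ_indep (fun i => hβ_law i.1 i.1.2 i.2 i.2.2)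
    (fun _ => Metric.isClosed_closedBall.measurableSet) fun i => ?_
  exact ofReal_le_gaussianReal_closedBall 0 hv (by simpa using hd i.2 i.1)

lemma exp_le_gaussian_ball_bound {T : ℝ} (hT : 0 < T) {k : ℕ} (hk : 1 ≤ k) (hN : 1 ≤ N)
    (hNT : 2 * T ≤ N) :
    exp (-((1 + 1 / (2 * T)) * (N : ℝ) ^ (2 * k + 1))) ≤
      2 * exp (-(N : ℝ) ^ 3) *
        ((√(2 * π * (T / N)))⁻¹ * exp (-((N : ℝ) ^ k) ^ 2 / (2 * (T / N)))) := by
  have hN_pos : (0 : ℝ) < N := by exact_mod_cast hN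
  have h_sqrt : 1 ≤ 2 * (√(2 * π * (T / N)))⁻¹ := by
    have h_var : 2 * π * (T / N) ≤ 2 ^ 2 := by
      rw [mul_div_assoc', div_le_iff₀ hN_pos]
      nlinarith [pi_le_four]
    rw [← div_eq_mul_inv, one_le_div (by positivity)]
    exact (sqrt_le_left zero_le_two).2 h_var
  have h_cube : (N : ℝ) ^ 3 ≤ (N : ℝ) ^ (2 * k + 1) :=
    pow_le_pow_right₀ (by exact_mod_cast hN) (by lia)
  calc exp (-((1 + 1 / (2 * T)) * (N : ℝ) ^ (2 * k + 1)))
      ≤ exp (-(N : ℝ) ^ 3 + -((N : ℝ) ^ k) ^ 2 / (2 * (T / N))) := by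
        gcongr
        have h_gauss : -((N : ℝ) ^ k) ^ 2 / (2 * (T / N)) =
            -(1 / (2 * T) * (N : ℝ) ^ (2 * k + 1)) := by
          field_simp
          ring
        linarith
    _ = 1 * (exp (-(N : ℝ) ^ 3) * exp (-((N : ℝ) ^ k) ^ 2 / (2 * (T / N)))) := by
      rw [exp_add, one_mul]
    _ ≤ 2 * (√(2 * π * (T / N)))⁻¹ *
        (exp (-(N : ℝ) ^ 3) * exp (-((N : ℝ) ^ k) ^ 2 / (2 * (T / N)))) := by gcongr
    _ = _ := by ring

lemma eventually_ofReal_exp_le_measure_shadowingEvent {T : ℝ} (hT : 0 < T)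
    {β : ℕ → ℤ → ℕ → Ω → ℝ}
    (hβ_indep : ∀ N, 1 ≤ N →
      iIndepFun (fun i : fourierModes N × Finset.Icc 1 N => β N i.1 i.2) P)
    (hβ_law : ∀ N, 1 ≤ N → ∀ j ∈ fourierModes N, ∀ n ∈ Finset.Icc 1 N,
      HasLaw (β N j n) (gaussianReal 0 (T / N).toNNReal) P) {k : ℕ} (hk : 1 ≤ k) :
    ∀ᶠ N : ℕ in Filter.atTop, ∀ d : ℕ → ℤ → ℝ,
      (∀ n j, |d n j| + exp (-(N : ℝ) ^ 3) ≤ (N : ℝ) ^ k) →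
      ENNReal.ofReal (exp (-(3 * (1 + 1 / (2 * T)) * (N : ℝ) ^ (2 * k + 3)))) ≤
        P (shadowingEvent (fourierModes N) N (β N) d (exp (-(N : ℝ) ^ 3))) := by
  filter_upwards [Filter.eventually_ge_atTop 1,
    tendsto_natCast_atTop_atTop.eventually_ge_atTop (2 * T)] with N hN hNT d hd
  have h_var : ((T / N).toNNReal : ℝ) = T / N := coe_toNNReal _ (by positivity)
  have h_event := ofReal_pow_le_measure_shadowingEvent (hβ_indep N hN)
    (toNNReal_pos.2 (by positivity)).ne' (hβ_law N hN) hd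
  rw [h_var, ← ENNReal.ofReal_pow (by positivity)] at h_event
  refine (ENNReal.ofReal_le_ofReal ?_).trans h_event
  have h_card : ((fourierModes N).card : ℝ) ≤ 3 * N := by exact_mod_cast card_fourierModes_le hN
  calc exp (-(3 * (1 + 1 / (2 * T)) * (N : ℝ) ^ (2 * k + 3)))
      = exp (-(3 * N * N * ((1 + 1 / (2 * T)) * (N : ℝ) ^ (2 * k + 1)))) := by ring_nf
    _ ≤ exp (-((fourierModes N).card * N * ((1 + 1 / (2 * T)) * (N : ℝ) ^ (2 * k + 1)))) := by
      gcongr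
    _ = exp (-((1 + 1 / (2 * T)) * (N : ℝ) ^ (2 * k + 1))) ^ ((fourierModes N).card * N) := by
      rw [← exp_nat_mul]
      push_cast
      ring_nf
    _ ≤ _ := by
      gcongr
      exact exp_le_gaussian_ball_bound hT hk hN hNT

end SteeringProbability

section Divergence

lemma tendsto_exp_mul_two_pow_sub_mul_pow {l : ℝ} (hl : 0 < l) (C : ℝ) (k : ℕ) :
    Filter.Tendsto (fun N : ℕ => exp (l * 2 ^ N - C * (N : ℝ) ^ k)) Filter.atTop Filter.atTop := by
  have h_ratio : Filter.Tendsto (fun N : ℕ => (N : ℝ) ^ k / 2 ^ N) Filter.atTop (nhds 0) :=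
    tendsto_pow_const_div_const_pow_of_one_lt k one_lt_two
  have h_factor : Filter.Tendsto (fun N : ℕ => l - C * ((N : ℝ) ^ k / 2 ^ N)) Filter.atTop
      (nhds l) := by
    simpa using tendsto_const_nhds.sub (h_ratio.const_mul C)
  refine tendsto_exp_atTop.comp (((tendsto_pow_atTop_atTop_of_one_lt
    (one_lt_two (α := ℝ))).atTop_mul_pos hl h_factor).congr fun N => ?_)
  field_simp

lemma exp_log_two_mul_eq (p : ℝ) (N : ℕ) :
    exp (log 2 * p * 2 ^ N) = (((2 : ℝ) ^ 2 ^ N) ^ 2) ^ (p / 2) := by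
  rw [← pow_mul, ← rpow_natCast 2 (2 ^ N * 2), ← rpow_mul zero_le_two, rpow_def_of_pos two_pos]
  push_cast
  ring_nf

lemma mul_measure_le_lintegral {Ω : Type*} [MeasurableSpace Ω] {P : Measure Ω} {E : Set Ω}
    (hE : NullMeasurableSet E P) {g : Ω → ℝ≥0∞} {a : ℝ≥0∞} (hg : ∀ ω ∈ E, a ≤ g ω) :
    a * P E ≤ ∫⁻ ω, g ω ∂P := by
  rw [← lintegral_indicator_const₀ hE]
  exact lintegral_mono (Set.indicator_le hg)

lemma isEulerMultiplier_exp {τ : ℝ} (hτ : 0 ≤ τ) (N : ℕ) :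
    IsEulerMultiplier (fourierModes N) fun j => exp (-(4 * π ^ 2 * (j : ℝ) ^ 2 * τ)) where
  zero_mem := by simp
  map_zero := by simp
  abs_le_one j _ := by
    rw [abs_exp, exp_le_one_iff, neg_nonpos]
    positivity

lemma isEulerMultiplier_inv {τ : ℝ} (hτ : 0 ≤ τ) (N : ℕ) :
    IsEulerMultiplier (fourierModes N) fun j => (1 + 4 * π ^ 2 * (j : ℝ) ^ 2 * τ)⁻¹ where
  zero_mem := by simp
  map_zero := by simp
  abs_le_one j _ := by
    rw [abs_of_nonneg (by positivity)]
    exact inv_le_one_of_one_le₀ (le_add_of_nonneg_right (by positivity))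

theorem spde_euler_divergence_general {Ω : Type*} [MeasurableSpace Ω] (P : Measure Ω)
    (T : ℝ) (hT : 0 < T)
    (f : ℝ → ℝ) (r : ℕ) (hr : 1 ≤ r) (L α R : ℝ) (hf : HasPowerGrowth f r L α R)
    (ξ : ℝ → ℝ) (hξ : IntegrableOn ξ (Set.Ioo 0 1))
    (s : ℕ → ℤ → ℝ) (hs : ∀ N, 1 ≤ N → IsEulerMultiplier (fourierModes N) (s N))
    (β : ℕ → ℤ → ℕ → Ω → ℝ)
    (hβindep : ∀ N, 1 ≤ N →
      iIndepFun (fun i : fourierModes N × Finset.Icc 1 N => β N i.1 i.2) P)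
    (hβlaw : ∀ N, 1 ≤ N → ∀ j ∈ fourierModes N, ∀ n ∈ Finset.Icc 1 N,
      HasLaw (β N j n) (gaussianReal 0 (T / N).toNNReal) P)
    (Y : ℕ → ℕ → Ω → ℝ → ℝ)
    (hY0 : ∀ N, 1 ≤ N → ∀ ω, Y N 0 ω = trigPoly (fourierModes N) (fourierCoef ξ))
    (hYrec : ∀ N, 1 ≤ N → ∀ n < N, ∀ ω, Y N (n + 1) ω =
      eulerStep (fourierModes N) (s N) (T / N) f (fun j => β N j (n + 1) ω) (Y N n ω))
    (p : ℝ) (hp : 0 < p) :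
    Filter.liminf (fun N : ℕ =>
        ∫⁻ ω, ENNReal.ofReal ((∫ x in Set.Ioo (0 : ℝ) 1, Y N N ω x ^ 2) ^ (p / 2)) ∂P)
      Filter.atTop = ⊤ := by
  have h_rate : 0 < log 2 * p := mul_pos (log_pos one_lt_two) hp
  refine (tendsto_nhds_top_mono (ENNReal.tendsto_ofReal_atTop.comp
    (tendsto_exp_mul_two_pow_sub_mul_pow h_rate (3 * (1 + 1 / (2 * T))) (2 * (r + 2) + 3)))
    ?_).liminf_eq
  filter_upwards [Filter.eventually_ge_atTop 1, eventually_isBlowupRegime hf hT,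
    eventually_ofReal_exp_le_measure_shadowingEvent hT hβindep hβlaw (by lia : 1 ≤ r + 2),
    eventually_abs_steeringNoise_add_le hf hr hT (abs_fourierCoef_le hξ)]
    with N hN hreg h_prob h_steering
  set E := shadowingEvent (fourierModes N) N (β N)
    (steeringNoise (fourierModes N) (T / N) f (fourierCoef ξ) ((N : ℝ) ^ 2)) (exp (-(N : ℝ) ^ 3))
  have hE : NullMeasurableSet E P :=
    nullMeasurableSet_shadowingEvent (fun j hj n hn => (hβlaw N hN j hj n hn).aemeasurable) _ _
  have h_norm (ω : Ω) (hω : ω ∈ E) : ENNReal.ofReal (exp (log 2 * p * 2 ^ N)) ≤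
      ENNReal.ofReal ((∫ x in Set.Ioo (0 : ℝ) 1, Y N N ω x ^ 2) ^ (p / 2)) := by
    rw [exp_log_two_mul_eq]
    gcongr
    exact hreg.sq_two_pow_two_pow_le_integral_sq (b := fun n j => β N j n ω)
      (y := fun n => Y N n ω) (hs N hN) hf hr hN (hY0 N hN ω)
      (fun n hn => hYrec N hN n hn ω) hω
  calc ENNReal.ofReal (exp (log 2 * p * 2 ^ N -
          3 * (1 + 1 / (2 * T)) * (N : ℝ) ^ (2 * (r + 2) + 3)))
      = ENNReal.ofReal (exp (log 2 * p * 2 ^ N)) *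
          ENNReal.ofReal (exp (-(3 * (1 + 1 / (2 * T)) * (N : ℝ) ^ (2 * (r + 2) + 3)))) := by
        rw [← ENNReal.ofReal_mul (exp_pos _).le, ← exp_add, sub_eq_add_neg]
    _ ≤ ENNReal.ofReal (exp (log 2 * p * 2 ^ N)) * P E := by
      gcongr
      exact h_prob _ h_steering
    _ ≤ _ := mul_measure_le_lintegral hE h_norm

end Divergence

/-- Strong and numerically weak divergence of full-discrete exponential Euler and linear-implicit
Euler spectral Galerkin approximations of reaction–diffusion SPDEs
`∂ₜX = ΔX + Σ_{k=0}^{q} a_k X^k + Ẇ` with space-time white noise and periodic boundary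
conditions on `(0,1)`: for every `p ∈ (0,∞)` it holds that
`liminf_{N→∞} E[‖Y^N_N‖²_{L²}^{p/2}] = ∞`. -/
theorem spde_euler_divergence
    {Ω : Type*} [MeasurableSpace Ω] (P : Measure Ω) [IsProbabilityMeasure P]
    (T : ℝ) (hT : 0 < T)
    (q : ℕ) (hq : 2 ≤ q) (a : ℕ → ℝ) (haq : a q ≠ 0)
    (χ : ℝ) (hχ : 1 / 4 < χ)
    (ξ : ℝ → ℝ) (hξ2 : MemLp ξ 2 (volume.restrict (Set.Ioo (0 : ℝ) 1)))
    (hξreg : Summable (fun n : ℤ =>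
        (1 + 4 * π ^ 2 * (n : ℝ) ^ 2) ^ (2 * χ) * fourierCoef ξ n ^ 2))
    (s : ℕ → ℤ → ℝ)
    (hs : ∀ N : ℕ, 1 ≤ N →
        (∀ j : ℤ, s N j = Real.exp (-(4 * π ^ 2 * (j : ℝ) ^ 2 * T / N))) ∨
        (∀ j : ℤ, s N j = (1 + 4 * π ^ 2 * (j : ℝ) ^ 2 * T / N)⁻¹))
    (β : ℕ → ℤ → ℕ → Ω → ℝ)
    (hβmeas : ∀ N j n, Measurable (β N j n))
    (hβindep : ∀ N : ℕ, 1 ≤ N →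
        iIndepFun
          (fun jn : (Finset.Icc (-(N : ℤ)) (N : ℤ)) × (Finset.Icc 1 N) =>
            β N (jn.1 : ℤ) (jn.2 : ℕ)) P)
    (hβlaw : ∀ N : ℕ, 1 ≤ N → ∀ j ∈ Finset.Icc (-(N : ℤ)) (N : ℤ), ∀ n ∈ Finset.Icc 1 N,
        P.map (β N j n) = gaussianReal 0 (Real.toNNReal (T / N)))
    (Y : ℕ → ℕ → Ω → ℝ → ℝ)
    (hY0 : ∀ N : ℕ, 1 ≤ N → ∀ ω, Y N 0 ω =
        fun x => ∑ j ∈ Finset.Icc (-(N : ℤ)) (N : ℤ), fourierCoef ξ j * trigBasisFun j x)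
    (hYrec : ∀ N : ℕ, 1 ≤ N → ∀ n < N, ∀ ω, Y N (n + 1) ω = fun x =>
        ∑ j ∈ Finset.Icc (-(N : ℤ)) (N : ℤ),
          s N j *
            fourierCoef (fun y => Y N n ω y +
              (T / N) * ∑ k ∈ Finset.range (q + 1), a k * (Y N n ω y) ^ k +
              ∑ i ∈ Finset.Icc (-(N : ℤ)) (N : ℤ), β N i (n + 1) ω * trigBasisFun i y) j *
            trigBasisFun j x)
    (p : ℝ) (hp : 0 < p) :
    Filter.liminf (fun N : ℕ =>
        ∫⁻ ω, ENNReal.ofReal ((∫ x in Set.Ioo (0 : ℝ) 1, (Y N N ω x) ^ 2) ^ (p / 2)) ∂P)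
      Filter.atTop = ⊤ := by
  obtain ⟨r, rfl⟩ : ∃ r, q = r + 1 := ⟨q - 1, by lia⟩
  obtain ⟨L, α, R, hf⟩ := exists_hasPowerGrowth_sum_mul_pow haq
  have hs_multiplier (N : ℕ) (hN : 1 ≤ N) : IsEulerMultiplier (fourierModes N) (s N) := by
    have hτ : 0 ≤ T / N := by positivity
    rcases hs N hN with h_exp | h_inv
    · simpa only [funext h_exp, mul_div_assoc] using isEulerMultiplier_exp hτ N
    · simpa only [funext h_inv, mul_div_assoc] using isEulerMultiplier_inv hτ N
  exact spde_euler_divergence_general P T hT _ r (by lia) L α R hf ξ (hξ2.integrable one_le_two)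
    s hs_multiplier β hβindep
    (fun N hN j hj n hn => ⟨(hβmeas N j n).aemeasurable, hβlaw N hN j hj n hn⟩) Y hY0 hYrec p hp
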